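/- arXiv:2405.16814 — 2 statements merged into one kernel-verified Lean document; each statement's English description precedes it below -/
import Mathlib

section
/- For every natural number r ≥ 1, the series ∑_{n=1}^∞ (1/((4√5)^n · α^{rn} · F_r^n)) · binom(2n,n) · H_n equals (2√(α^r F_r √5)/√(α^r F_r √5 − 1)) · ln((√(α^r F_r √5) + √(α^r F_r √5 − 1))/(2√(α^r F_r √5 − 1))). -/
open Real

/-- The `n`-th harmonic number `H n = ∑_{k=1}^n 1/k`. -/
noncomputable def H (n : ℕ) : ℝ := ∑ k ∈ Finset.range n, 1 / (k + 1 : ℝ)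

/-- The golden ratio `α = (1 + √5)/2`. -/
noncomputable def α : ℝ := (1 + Real.sqrt 5) / 2

/-!
With `c n = binom(2n,n) / 4 ^ n`, the series of the theorem is `∑ n ≥ 1, c n * H n * t ^ n` at
`t = 1 / (√5 * α ^ r * F_r)`, a point of `(0, 1)`. So it suffices to evaluate, on `[0, 1)`,
`B t = ∑ c n * H n * t ^ n = 2 / s * log ((1 + s) / (2 * s))`, where `s = √(1 - t)`.

The ratio `(n + 1) * c (n + 1) = (n + 1 / 2) * c n` turns into a first-order linear differential
equation `(1 - t) * f' = f / 2 + g` for both generating functions (`powSum_ode`): with `g = 0` for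
`A t = ∑ c n * t ^ n`, and with `g t = ∑ c (n + 1) * t ^ n = (A t - 1) / t` for `B`. The first
one says that `s * A` is constant, so `A = 1 / s` (`powSum_c`). The second one then says that
`s * B - 2 * log ((1 + s) / (2 * s))` has zero derivative on `(0, 1)`, and this function vanishes
at `0` (`powSum_cH`).
-/

/-- The sum of the power series with coefficients `a`. -/
noncomputable def powSum (a : ℕ → ℝ) (t : ℝ) : ℝ := ∑' n, a n * t ^ n

/-- The normalized central binomial coefficient `binom(2n,n) / 4 ^ n`. -/
noncomputable def c (n : ℕ) : ℝ := (Nat.centralBinom n : ℝ) / 4 ^ n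

lemma c_nonneg (n : ℕ) : 0 ≤ c n := by unfold c; positivity

lemma c_le_one (n : ℕ) : c n ≤ 1 := by
  unfold c
  rw [div_le_one (by positivity)]
  exact_mod_cast Nat.centralBinom_le_four_pow n

lemma c_zero : c 0 = 1 := by simp [c]

lemma c_succ (n : ℕ) : ((n : ℝ) + 1) * c (n + 1) = (n + 1 / 2) * c n := by
  have h : ((n : ℝ) + 1) * (Nat.centralBinom (n + 1) : ℝ)
      = 2 * (2 * n + 1) * (Nat.centralBinom n : ℝ) := by
    exact_mod_cast Nat.succ_mul_centralBinom_succ n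
  unfold c
  rw [pow_succ, ← mul_div_assoc, h]
  field_simp
  ring

lemma H_zero : H 0 = 0 := by simp [H]

lemma H_succ (n : ℕ) : H (n + 1) = H n + 1 / (n + 1 : ℝ) := by
  simp [H, Finset.sum_range_succ]

lemma H_nonneg (n : ℕ) : 0 ≤ H n := Finset.sum_nonneg fun k _ => by positivity

lemma H_le (n : ℕ) : H n ≤ n := by
  induction n with
  | zero => simp [H_zero]
  | succ n ih =>
    rw [H_succ]
    have : 1 / (n + 1 : ℝ) ≤ 1 := by
      rw [div_le_one (by positivity)]
      linarith [(Nat.cast_nonneg n : (0 : ℝ) ≤ n)]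
    push_cast
    linarith

lemma abs_c_le (n : ℕ) : |c n| ≤ n + 1 := by
  rw [abs_of_nonneg (c_nonneg n)]
  linarith [c_le_one n, (Nat.cast_nonneg n : (0 : ℝ) ≤ n)]

lemma abs_cH_le (n : ℕ) : |c n * H n| ≤ n + 1 := by
  rw [abs_of_nonneg (mul_nonneg (c_nonneg n) (H_nonneg n))]
  nlinarith [c_le_one n, c_nonneg n, H_nonneg n, H_le n]

lemma summable_coeff {a : ℕ → ℝ} (ha : ∀ n, |a n| ≤ n + 1) {t : ℝ} (ht : |t| < 1) :
    Summable fun n => a n * t ^ n := by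
  have ht' : ‖|t|‖ < 1 := by simpa using ht
  refine Summable.of_norm_bounded
    ((summable_pow_mul_geometric_of_norm_lt_one 1 ht').add
      (summable_pow_mul_geometric_of_norm_lt_one 0 ht')) fun n => ?_
  rw [Real.norm_eq_abs, abs_mul, abs_pow]
  have := mul_le_mul_of_nonneg_right (ha n) (pow_nonneg (abs_nonneg t) n)
  simp only [pow_one, pow_zero]
  linarith

lemma summable_deriv_bound {ρ : ℝ} (h0 : 0 ≤ ρ) (h1 : ρ < 1) :
    Summable fun n : ℕ => ((n : ℝ) + 1) * (n * ρ ^ (n - 1)) := by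
  rw [← summable_nat_add_iff 1]
  have h1' : ‖ρ‖ < 1 := by rwa [Real.norm_eq_abs, abs_of_nonneg h0]
  have := ((summable_pow_mul_geometric_of_norm_lt_one 2 h1').add
    ((summable_pow_mul_geometric_of_norm_lt_one 1 h1').mul_left 3)).add
      ((summable_pow_mul_geometric_of_norm_lt_one 0 h1').mul_left 2)
  refine this.congr fun n => ?_
  simp only [Nat.add_sub_cancel]
  push_cast
  ring

lemma norm_deriv_term_le {a : ℕ → ℝ} (ha : ∀ n, |a n| ≤ n + 1) {ρ y : ℝ} (hy : |y| ≤ ρ)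
    (n : ℕ) : ‖a n * (n * y ^ (n - 1))‖ ≤ ((n : ℝ) + 1) * (n * ρ ^ (n - 1)) := by
  rw [Real.norm_eq_abs, abs_mul, abs_mul, abs_pow, Nat.abs_cast]
  gcongr
  exact ha n

lemma powSum_hasDerivAt {a : ℕ → ℝ} (ha : ∀ n, |a n| ≤ n + 1) {t : ℝ} (ht : |t| < 1) :
    HasDerivAt (powSum a) (∑' n : ℕ, a n * (n * t ^ (n - 1))) t := by
  obtain ⟨ρ, h1, h2⟩ := exists_between ht
  have hρ : 0 ≤ ρ := (abs_nonneg t).trans h1.le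
  have hmem : ∀ y ∈ Set.Ioo (-ρ) ρ, |y| < ρ := fun y hy => abs_lt.2 hy
  exact hasDerivAt_tsum_of_isPreconnected (t := Set.Ioo (-ρ) ρ) (y₀ := t)
    (g := fun n y => a n * y ^ n) (g' := fun n y => a n * (n * y ^ (n - 1)))
    (summable_deriv_bound hρ h2) isOpen_Ioo isPreconnected_Ioo
    (fun n y _ => (hasDerivAt_pow n y).const_mul (a n))
    (fun n y hy => norm_deriv_term_le ha (hmem y hy).le n)
    (abs_lt.1 h1) (summable_coeff ha ht) (abs_lt.1 h1)

/-- A power series whose coefficients satisfy the recurrence of `c`, up to an inhomogeneous term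
`b`, solves `(1 - t) * f' = f / 2 + g`, where `g` is the power series with coefficients `b`. -/
lemma powSum_ode {a b : ℕ → ℝ} (ha : ∀ n, |a n| ≤ n + 1) (hb : ∀ n, |b n| ≤ n + 1)
    (hab : ∀ n : ℕ, ((n : ℝ) + 1) * a (n + 1) = (n + 1 / 2) * a n + b n)
    {t : ℝ} (ht : |t| < 1) :
    ∃ d, HasDerivAt (powSum a) d t ∧ (1 - t) * d = powSum a t / 2 + powSum b t := by
  refine ⟨_, powSum_hasDerivAt ha ht, ?_⟩
  have hs : Summable fun n : ℕ => a n * (n * t ^ (n - 1)) :=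
    Summable.of_norm_bounded (summable_deriv_bound (abs_nonneg t) ht)
      (norm_deriv_term_le ha le_rfl)
  have hterm : ∀ n : ℕ, a (n + 1) * ((n + 1 : ℕ) * t ^ (n + 1 - 1))
      = t * (a n * (n * t ^ (n - 1))) + a n * t ^ n / 2 + b n * t ^ n := by
    intro n
    have h1 : t * (n * t ^ (n - 1)) = n * t ^ n := by
      cases n with
      | zero => simp
      | succ m => simp only [Nat.add_sub_cancel, pow_succ]; ring
    simp only [Nat.add_sub_cancel]
    push_cast
    linear_combination t ^ n * hab n - a n * h1
  have key : ∑' n : ℕ, a n * (n * t ^ (n - 1))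
      = t * (∑' n : ℕ, a n * (n * t ^ (n - 1))) + powSum a t / 2 + powSum b t := by
    conv_lhs => rw [hs.tsum_eq_zero_add]
    have hA := summable_coeff ha ht
    have hB := summable_coeff hb ht
    rw [tsum_congr hterm, ((hs.mul_left t).add (hA.div_const 2)).tsum_add hB,
      (hs.mul_left t).tsum_add (hA.div_const 2), tsum_mul_left, tsum_div_const]
    simp [powSum]
  linear_combination key

lemma powSum_at_zero (a : ℕ → ℝ) : powSum a 0 = a 0 := by
  unfold powSum
  rw [tsum_eq_single 0 fun n hn => by simp [hn]]
  simp

lemma eq_of_deriv_zero {f : ℝ → ℝ} {t : ℝ} (ht : 0 < t)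
    (hc : ContinuousOn f (Set.Icc 0 t)) (hd : ∀ x ∈ Set.Ioo 0 t, HasDerivAt f 0 x) :
    f t = f 0 := by
  obtain ⟨x, -, hx⟩ := exists_hasDerivAt_eq_slope f (fun _ => 0) ht hc hd
  have := ht.ne'
  rw [sub_zero, eq_comm, div_eq_zero_iff] at hx
  exact sub_eq_zero.1 (hx.resolve_right this)

lemma hasDerivAt_sqrt_one_sub {x : ℝ} (hx : x < 1) :
    HasDerivAt (fun y => √(1 - y)) (-1 / (2 * √(1 - x))) x :=
  ((hasDerivAt_id x).const_sub 1).sqrt (by simpa using (sub_pos.2 hx).ne')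

/-- The binomial series `∑ binom(2n,n) / 4 ^ n * t ^ n = (1 - t) ^ (-1/2)`. -/
lemma powSum_c {t : ℝ} (h0 : 0 < t) (h1 : t < 1) : powSum c t = 1 / √(1 - t) := by
  have hpos : ∀ x : ℝ, x < 1 → 0 < √(1 - x) := fun x hx => Real.sqrt_pos.2 (sub_pos.2 hx)
  have hd : ∀ x ∈ Set.Icc 0 t, HasDerivAt (fun y => √(1 - y) * powSum c y) 0 x := by
    intro x hx
    have hx1 : x < 1 := hx.2.trans_lt h1
    obtain ⟨d, hd, he⟩ := powSum_ode (b := fun _ => 0) abs_c_le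
      (fun n => by rw [abs_zero]; positivity)
      (fun n => by rw [c_succ, add_zero]) (abs_lt.2 ⟨by linarith [hx.1], hx1⟩)
    have hb : powSum (fun _ => 0) x = 0 := by simp [powSum]
    refine ((hasDerivAt_sqrt_one_sub hx1).mul hd).congr_deriv ?_
    have hs := hpos x hx1
    have hsq : √(1 - x) ^ 2 = 1 - x := Real.sq_sqrt (by linarith)
    rw [hb, ← hsq] at he
    field_simp
    linear_combination 2 * he
  have h := eq_of_deriv_zero h0 (fun x hx => (hd x hx).continuousAt.continuousWithinAt)
    fun x hx => hd x ⟨hx.1.le, hx.2.le⟩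
  simp only [powSum_at_zero, c_zero, sub_zero, Real.sqrt_one, mul_one] at h
  rw [eq_div_iff (hpos t h1).ne', mul_comm]
  exact h

lemma powSum_c_shift {t : ℝ} (h0 : 0 < t) (h1 : t < 1) :
    t * powSum (fun n => c (n + 1)) t = 1 / √(1 - t) - 1 := by
  rw [← powSum_c h0 h1]
  have hs := summable_coeff abs_c_le (abs_lt.2 ⟨by linarith, h1⟩ : |t| < 1)
  unfold powSum
  rw [hs.tsum_eq_zero_add, ← tsum_mul_left, c_zero]
  simp only [pow_zero, mul_one, add_sub_cancel_left]
  exact tsum_congr fun n => by rw [pow_succ]; ring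

/-- The generating function of `binom(2n,n) / 4 ^ n * H n`. -/
lemma powSum_cH {t : ℝ} (h0 : 0 < t) (h1 : t < 1) :
    powSum (fun n => c n * H n) t
      = 2 / √(1 - t) * Real.log ((1 + √(1 - t)) / (2 * √(1 - t))) := by
  have hpos : ∀ x : ℝ, x < 1 → 0 < √(1 - x) := fun x hx => Real.sqrt_pos.2 (sub_pos.2 hx)
  -- The logarithm of the quotient is split, and the constant `2 * log 2` dropped.
  let G : ℝ → ℝ := fun y => √(1 - y) * powSum (fun n => c n * H n) y
    - 2 * (Real.log (1 + √(1 - y)) - Real.log √(1 - y))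
  have hd : ∀ x, |x| < 1 → ∃ d, HasDerivAt (powSum fun n => c n * H n) d x ∧
      (1 - x) * d = powSum (fun n => c n * H n) x / 2 + powSum (fun n => c (n + 1)) x ∧
      HasDerivAt G (-1 / (2 * √(1 - x)) * powSum (fun n => c n * H n) x + √(1 - x) * d
        - 2 * (-1 / (2 * √(1 - x)) / (1 + √(1 - x)) - -1 / (2 * √(1 - x)) / √(1 - x))) x := by
    intro x hx
    have hx1 := (abs_lt.1 hx).2
    have hs := hpos x hx1
    obtain ⟨d, hd, he⟩ := powSum_ode (b := fun n => c (n + 1)) abs_cH_le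
      (fun n => by
        rw [abs_of_nonneg (c_nonneg _)]
        linarith [c_le_one (n + 1), (Nat.cast_nonneg n : (0 : ℝ) ≤ n)])
      (fun n => by
        rw [H_succ]
        have := c_succ n
        field_simp
        linear_combination (2 * H n) * this) hx
    have hq := hasDerivAt_sqrt_one_sub hx1
    exact ⟨d, hd, he, (hq.mul hd).sub
      (((hq.const_add 1).log (by positivity)).sub (hq.log hs.ne') |>.const_mul 2)⟩
  have h := eq_of_deriv_zero (f := G) h0
    (fun x hx => by
      obtain ⟨d, -, -, h⟩ := hd x (abs_lt.2 ⟨by linarith [hx.1], hx.2.trans_lt h1⟩)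
      exact h.continuousAt.continuousWithinAt)
    (fun x hx => by
      have hx1 := hx.2.trans h1
      obtain ⟨d, -, he, h⟩ := hd x (abs_lt.2 ⟨by linarith [hx.1], hx1⟩)
      refine h.congr_deriv ?_
      have hs := hpos x hx1
      have hsq : √(1 - x) ^ 2 = 1 - x := Real.sq_sqrt (by linarith)
      have hA := powSum_c_shift hx.1 hx1
      have hs1 : √(1 - x) ≠ 1 := by
        intro h; rw [h] at hsq; linarith [hx.1]
      generalize √(1 - x) = s at *
      have hx' : x = (1 - s) * (1 + s) := by linear_combination hsq
      have hg : powSum (fun n => c (n + 1)) x = 1 / (s * (1 + s)) := by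
        have h1s : 1 - s ≠ 0 := sub_ne_zero.2 hs1.symm
        apply mul_left_cancel₀ hx.1.ne'
        rw [hA]
        nth_rewrite 1 [hx']
        field_simp
      rw [hg, ← hsq] at he
      generalize powSum (fun n => c n * H n) x = B at *
      field_simp at he ⊢
      linear_combination he)
  have hs := hpos t h1
  simp only [G, powSum_at_zero, H_zero, sub_zero, Real.sqrt_one, mul_zero, Real.log_one] at h
  rw [Real.log_div (by positivity) (by positivity), Real.log_mul two_ne_zero hs.ne']
  norm_num at h
  field_simp
  linear_combination h

lemma one_lt_α_pow_mul_fib_mul_sqrt_five {r : ℕ} (hr : 1 ≤ r) :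
    1 < α ^ r * (Nat.fib r : ℝ) * √5 := by
  have h5 : (1 : ℝ) < √5 := Real.lt_sqrt_of_sq_lt (by norm_num)
  have hα : 1 ≤ α ^ r := one_le_pow₀ (by unfold α; linarith)
  have hF : (1 : ℝ) ≤ Nat.fib r := by exact_mod_cast Nat.fib_pos.2 hr
  have := one_le_mul_of_one_le_of_one_le hα hF
  nlinarith

theorem stmt_0 (r : ℕ) (hr : 1 ≤ r) :
    ∑' n : ℕ,
        (1 / ((4 * Real.sqrt 5) ^ (n + 1) * α ^ (r * (n + 1)) *
          ((Nat.fib r : ℝ)) ^ (n + 1))) *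
        (Nat.choose (2 * (n + 1)) (n + 1) : ℝ) * H (n + 1)
      = 2 * Real.sqrt (α ^ r * (Nat.fib r : ℝ) * Real.sqrt 5) /
          Real.sqrt (α ^ r * (Nat.fib r : ℝ) * Real.sqrt 5 - 1) *
        Real.log ((Real.sqrt (α ^ r * (Nat.fib r : ℝ) * Real.sqrt 5) +
            Real.sqrt (α ^ r * (Nat.fib r : ℝ) * Real.sqrt 5 - 1)) /
          (2 * Real.sqrt (α ^ r * (Nat.fib r : ℝ) * Real.sqrt 5 - 1))) := by
  have hy := one_lt_α_pow_mul_fib_mul_sqrt_five hr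
  have hsum : ∀ n : ℕ, (1 / ((4 * Real.sqrt 5) ^ (n + 1) * α ^ (r * (n + 1)) *
          ((Nat.fib r : ℝ)) ^ (n + 1))) * (Nat.choose (2 * (n + 1)) (n + 1) : ℝ) * H (n + 1)
      = c (n + 1) * H (n + 1) * (1 / (α ^ r * (Nat.fib r : ℝ) * √5)) ^ (n + 1) := by
    intro n
    rw [c, Nat.centralBinom_eq_two_mul_choose, div_pow, one_pow, mul_pow, mul_pow, mul_pow,
      pow_mul]
    simp only [div_eq_mul_inv, mul_inv, one_mul]
    ring
  rw [tsum_congr hsum]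
  generalize α ^ r * (Nat.fib r : ℝ) * √5 = y at *
  have hy0 : 0 < y := by linarith
  have ht0 : 0 < 1 / y := by positivity
  have ht1 : 1 / y < 1 := (div_lt_one hy0).2 hy
  have h := powSum_cH ht0 ht1
  have hs := summable_coeff abs_cH_le (abs_lt.2 ⟨by linarith, ht1⟩ : |1 / y| < 1)
  rw [powSum, hs.tsum_eq_zero_add, H_zero, mul_zero, zero_mul, zero_add] at h
  rw [h]
  have e : √(1 - 1 / y) = √(y - 1) / √y := by
    rw [← Real.sqrt_div (by linarith), sub_div, div_self hy0.ne']
  have h1 : 0 < √y := Real.sqrt_pos.2 hy0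
  have h2 : 0 < √(y - 1) := Real.sqrt_pos.2 (by linarith)
  rw [e]
  congr 1
  · field_simp
  · congr 1
    field_simp
end

section
/- For every real number x with 0 < |x| < 1/4, the series ∑_{n=1}^∞ C_n · (H_{2n} − H_n) · x^n equals (1/(2x)) · [(1 − √(1−4x)) + (1 + √(1−4x)) · ln((1 + √(1−4x))/2)]. -/
/-!
Write `s = √(1 - 4x)` and `L = log ((1 + s) / 2)`. The closed form
`R = (1 - s) + (1 + s) L` has derivative `-2 L / s`, whereas the series multiplied by `2x` has
derivative `2 ∑ b_n x^n` with `b_n = binom(2n, n) (H_{2n} - H_n)`. So the claim reduces to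
`∑ b_n x^n = -L / s` (`ogf_cbh`), both sides of the identity vanishing at `0`.

This in turn follows from the recurrence `(n+1) b_{n+1} = (4n+2) b_n + C_n`, which says that
`g = ∑ b_n x^n` solves `(1 - 4x) g' = 2 g + c` with `c` the generating function of the Catalan
numbers (`ogf_ode`); since `c = 2 / (1 + s)`, the function `s g + L` has zero derivative.
The formula for `c` (`ogf_catalan`) is obtained the same way, from the homogeneous recurrence of the
central binomial coefficients, which gives `∑ binom(2n, n) x^n = 1 / s` (`ogf_centralBinom`).
Termwise differentiation on `|x| < 1/4` is justified by the bound `|a_n| ≤ (n+1) 4^n`, which all the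
coefficient sequences satisfy.
-/

open Real

/-- The `n`-th Catalan number `C n = (1/(n+1)) * binom(2n, n)`, as a real number. -/
noncomputable def C (n : ℕ) : ℝ := (Nat.choose (2 * n) n : ℝ) / (n + 1)

/-! ### Term-by-term differentiation of generating functions -/

/-- The ordinary generating function `∑ a_n x^n`, as a real function. -/
noncomputable def ogf (a : ℕ → ℝ) (x : ℝ) : ℝ := ∑' n, a n * x ^ n

/-- The growth condition on coefficients that makes `ogf a` converge, and be differentiable
term by term, on `|x| < 1/4`. -/
def Tame (a : ℕ → ℝ) : Prop := ∀ n, |a n| ≤ (n + 1) * 4 ^ n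

lemma ogf_zero (a : ℕ → ℝ) : ogf a 0 = a 0 := by
  unfold ogf
  rw [tsum_eq_single 0]
  · simp
  · intro n hn
    simp [hn]

lemma Tame.summable {a : ℕ → ℝ} (ha : Tame a) {x : ℝ} (hx : |x| < 1 / 4) :
    Summable fun n => a n * x ^ n := by
  have h4 : ‖4 * |x|‖ < 1 := by
    rw [Real.norm_eq_abs, abs_of_nonneg (by positivity)]; linarith
  have h1 := summable_pow_mul_geometric_of_norm_lt_one 1 h4
  have h0 := summable_pow_mul_geometric_of_norm_lt_one 0 h4
  refine Summable.of_norm_bounded (h1.add h0) fun n => ?_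
  rw [Real.norm_eq_abs, abs_mul, abs_pow]
  calc |a n| * |x| ^ n ≤ ((n + 1) * 4 ^ n) * |x| ^ n := by gcongr; exact ha n
    _ = _ := by rw [mul_pow]; ring

/-- Termwise differentiation. For `|x| < r < 1/4` the differentiated series is dominated on the ball of
radius `r` by a polynomial times the geometric series of ratio `4 r`. -/
lemma Tame.hasDerivAt {a : ℕ → ℝ} (ha : Tame a) {x : ℝ} (hx : |x| < 1 / 4) :
    Summable (fun n : ℕ => ((n : ℝ) + 1) * a (n + 1) * x ^ n) ∧
    HasDerivAt (ogf a) (ogf (fun n : ℕ => ((n : ℝ) + 1) * a (n + 1)) x) x := by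
  obtain ⟨r, hxr, hr⟩ := exists_between hx
  have hr0 : 0 < r := (abs_nonneg x).trans_lt hxr
  have h4 : ‖4 * r‖ < 1 := by
    rw [Real.norm_eq_abs, abs_of_nonneg (by positivity)]; linarith
  have hu : Summable fun n : ℕ =>
      ((n : ℝ) ^ 2 * (4 * r) ^ n + (n : ℝ) ^ 1 * (4 * r) ^ n) * r⁻¹ :=
    ((summable_pow_mul_geometric_of_norm_lt_one 2 h4).add
      (summable_pow_mul_geometric_of_norm_lt_one 1 h4)).mul_right _
  have hb : ∀ (n : ℕ) (y : ℝ), y ∈ Metric.ball (0 : ℝ) r → ‖a n * (n * y ^ (n - 1))‖ ≤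
      ((n : ℝ) ^ 2 * (4 * r) ^ n + (n : ℝ) ^ 1 * (4 * r) ^ n) * r⁻¹ := by
    intro n y hy
    have hy : |y| < r := by simpa using hy
    rcases n with _ | n
    · simp
    rw [Real.norm_eq_abs, abs_mul, abs_mul, abs_pow, Nat.abs_cast, Nat.add_sub_cancel]
    calc |a (n + 1)| * (((n + 1 : ℕ) : ℝ) * |y| ^ n)
        ≤ ((((n + 1 : ℕ) : ℝ) + 1) * 4 ^ (n + 1)) * (((n + 1 : ℕ) : ℝ) * r ^ n) := by
          gcongr; exact ha (n + 1)
      _ = _ := by rw [mul_pow, pow_succ r]; field_simp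
  have hmem : x ∈ Metric.ball (0 : ℝ) r := by simpa using hxr
  have hd := hasDerivAt_tsum_of_isPreconnected (g := fun n y => a n * y ^ n)
    (g' := fun n y => a n * (n * y ^ (n - 1))) hu Metric.isOpen_ball
    (convex_ball (0 : ℝ) r).isPreconnected
    (fun n y _ => (hasDerivAt_pow n y).const_mul (a n)) hb hmem (ha.summable hx) hmem
  have hs : Summable fun n : ℕ => a n * (n * x ^ (n - 1)) :=
    Summable.of_norm_bounded hu fun n => hb n x hmem
  have he : (fun n : ℕ => a (n + 1) * (((n + 1 : ℕ) : ℝ) * x ^ (n + 1 - 1))) =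
      fun n : ℕ => ((n : ℝ) + 1) * a (n + 1) * x ^ n := by
    funext n
    push_cast
    ring
  refine ⟨he ▸ (summable_nat_add_iff 1).2 hs, ?_⟩
  rw [hs.tsum_eq_zero_add, he] at hd
  rw [Nat.cast_zero, zero_mul, mul_zero, zero_add] at hd
  exact hd

/-- A recurrence `(n+1) a_{n+1} = (4n+2) a_n + d_n` translated into a differential equation for the
generating function. -/
lemma ogf_ode {a d : ℕ → ℝ} (ha : Tame a) (hd : Tame d)
    (h : ∀ n : ℕ, ((n : ℝ) + 1) * a (n + 1) = (4 * n + 2) * a n + d n) {x : ℝ}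
    (hx : |x| < 1 / 4) :
    ∃ D, HasDerivAt (ogf a) D x ∧ (1 - 4 * x) * D = 2 * ogf a x + ogf d x := by
  obtain ⟨hs, hD⟩ := ha.hasDerivAt hx
  refine ⟨_, hD, ?_⟩
  -- `x g' = ∑ n a_n x^n`
  have hs' : Summable fun n : ℕ => (n : ℝ) * a n * x ^ n := by
    rw [← summable_nat_add_iff 1]
    refine (hs.mul_left x).congr fun n => ?_
    push_cast; ring
  have e1 : x * ogf (fun n : ℕ => ((n : ℝ) + 1) * a (n + 1)) x = ∑' n : ℕ, (n : ℝ) * a n * x ^ n := by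
    rw [hs'.tsum_eq_zero_add, ogf, ← tsum_mul_left]
    simp only [Nat.cast_zero, zero_mul, zero_add]
    refine tsum_congr fun n => ?_
    push_cast; ring
  have e2 : ogf (fun n : ℕ => ((n : ℝ) + 1) * a (n + 1)) x =
      4 * ∑' n : ℕ, (n : ℝ) * a n * x ^ n + 2 * ogf a x + ogf d x := by
    unfold ogf
    rw [← tsum_mul_left, ← tsum_mul_left,
      ← (hs'.mul_left 4).tsum_add ((ha.summable hx).mul_left 2),
      ← ((hs'.mul_left 4).add ((ha.summable hx).mul_left 2)).tsum_add (hd.summable hx)]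
    refine tsum_congr fun n => ?_
    linear_combination x ^ n * h n
  rw [← e1] at e2
  linarith

lemma eq_of_hasDerivAt_zero {f : ℝ → ℝ} (hf : ∀ x, |x| < 1 / 4 → HasDerivAt f 0 x) {x : ℝ}
    (hx : |x| < 1 / 4) : f x = f 0 := by
  have hb : ∀ y, y ∈ Metric.ball (0 : ℝ) (1 / 4) ↔ |y| < 1 / 4 := by simp
  refine Metric.isOpen_ball.is_const_of_deriv_eq_zero (convex_ball (0 : ℝ) (1 / 4)).isPreconnected
    (fun y hy => (hf y ((hb y).1 hy)).differentiableAt.differentiableWithinAt)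
    (fun y hy => (hf y ((hb y).1 hy)).deriv) ((hb x).2 hx) ((hb 0).2 (by norm_num))

/-! ### Derivatives of `s` and `L` -/

lemma sqrt_facts {x : ℝ} (hx : |x| < 1 / 4) :
    0 < √(1 - 4 * x) ∧ √(1 - 4 * x) ^ 2 = 1 - 4 * x ∧
      HasDerivAt (fun y => √(1 - 4 * y)) (-2 / √(1 - 4 * x)) x := by
  have h : 0 < 1 - 4 * x := by linarith [le_abs_self x]
  refine ⟨Real.sqrt_pos.2 h, Real.sq_sqrt h.le, ?_⟩
  have h1 : HasDerivAt (fun y : ℝ => 1 - 4 * y) (-4) x := by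
    simpa using ((hasDerivAt_id x).const_mul 4).const_sub 1
  refine (h1.sqrt h.ne').congr_deriv ?_
  ring

lemma hasDerivAt_log_half {x : ℝ} (hx : |x| < 1 / 4) :
    HasDerivAt (fun y => Real.log ((1 + √(1 - 4 * y)) / 2))
      (-2 / (√(1 - 4 * x) * (1 + √(1 - 4 * x)))) x := by
  obtain ⟨hs, -, hd⟩ := sqrt_facts hx
  refine (((hd.const_add 1).div_const 2).log (by positivity)).congr_deriv ?_
  field_simp

/-! ### The coefficient sequences -/

/-- The central binomial coefficient `binom(2n, n)`, as a real number. -/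
noncomputable def cb (n : ℕ) : ℝ := n.centralBinom

/-- The sequence `binom(2n, n) (H_{2n} - H_n)`, which is `n + 1` times the coefficient of `x^n` in the
series to be summed. -/
noncomputable def cbh (n : ℕ) : ℝ := cb n * (H (2 * n) - H n)

/-- The coefficients of `x ↦ x * ogf a x`. -/
def shift (a : ℕ → ℝ) : ℕ → ℝ
  | 0 => 0
  | n + 1 => a n

lemma C_eq (n : ℕ) : C n = cb n / (n + 1) := by
  rw [C, cb, Nat.centralBinom_eq_two_mul_choose]

lemma cb_pos (n : ℕ) : 0 < cb n := by
  rw [cb]; exact_mod_cast n.centralBinom_pos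

lemma cb_le (n : ℕ) : cb n ≤ 4 ^ n := by
  rw [cb]; exact_mod_cast n.centralBinom_le_four_pow

lemma cb_succ (n : ℕ) : ((n : ℝ) + 1) * cb (n + 1) = (4 * n + 2) * cb n := by
  have := Nat.succ_mul_centralBinom_succ n
  have h : ((n : ℝ) + 1) * cb (n + 1) = 2 * (2 * n + 1) * cb n := by
    rw [cb, cb]; exact_mod_cast this
  rw [h]; ring

lemma H_diff_succ (n : ℕ) : H (2 * (n + 1)) - H (n + 1) =
    H (2 * n) - H n + 1 / ((2 * n + 1) * (2 * n + 2)) := by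
  rw [show 2 * (n + 1) = 2 * n + 1 + 1 by ring]
  simp only [H, Finset.sum_range_succ]
  push_cast
  field_simp
  ring

lemma H_diff_bound (n : ℕ) : 0 ≤ H (2 * n) - H n ∧ H (2 * n) - H n ≤ n := by
  induction n with
  | zero => simp [H]
  | succ n ih =>
    rw [H_diff_succ]
    have h0 : (0 : ℝ) ≤ 1 / ((2 * n + 1) * (2 * n + 2)) := by positivity
    have h1 : (1 : ℝ) / ((2 * n + 1) * (2 * n + 2)) ≤ 1 := by
      rw [div_le_one (by positivity)]
      nlinarith [(n.cast_nonneg : (0 : ℝ) ≤ n)]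
    push_cast
    exact ⟨by linarith, by linarith⟩

/-- The recurrence of the central binomial coefficients acquires the inhomogeneous term `C_n` from the
increment `1 / ((2n+1)(2n+2))` of `H_{2n} - H_n`. -/
lemma cbh_succ (n : ℕ) : ((n : ℝ) + 1) * cbh (n + 1) = (4 * n + 2) * cbh n + C n := by
  rw [cbh, cbh, ← mul_assoc, cb_succ, H_diff_succ, C_eq]
  field_simp
  ring

lemma tame_cb : Tame cb := fun n => by
  rw [abs_of_pos (cb_pos n)]
  have : (0 : ℝ) ≤ n * 4 ^ n := by positivity
  linarith [cb_le n]

lemma tame_cbh : Tame cbh := fun n => by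
  obtain ⟨h0, h1⟩ := H_diff_bound n
  rw [cbh, abs_of_nonneg (mul_nonneg (cb_pos n).le h0), mul_comm]
  exact mul_le_mul (by linarith) (cb_le n) (cb_pos n).le (by positivity)

lemma Tame.div {a : ℕ → ℝ} (ha : Tame a) : Tame fun n => a n / (n + 1) := fun n => by
  have h : (0 : ℝ) < n + 1 := by positivity
  rw [abs_div, abs_of_pos h]
  refine (div_le_self (abs_nonneg _) ?_).trans (ha n)
  have := (n.cast_nonneg : (0 : ℝ) ≤ n)
  linarith

lemma Tame.shift {a : ℕ → ℝ} (ha : Tame a) : Tame (shift a) := fun n => by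
  rcases n with _ | n
  · simp [_root_.shift]
  · refine (ha n).trans ?_
    push_cast
    gcongr <;> norm_num

lemma tame_C : Tame C := by
  rw [funext C_eq]; exact tame_cb.div

lemma ogf_shift {a : ℕ → ℝ} (ha : Tame a) {x : ℝ} (hx : |x| < 1 / 4) :
    ogf (shift a) x = x * ogf a x := by
  rw [ogf, (ha.shift.summable hx).tsum_eq_zero_add, ogf, ← tsum_mul_left]
  simp only [shift, zero_mul, zero_add]
  exact tsum_congr fun n => by ring

/-- Dividing `a_n` by `n + 1` amounts to integrating the generating function. -/
lemma hasDerivAt_mul_ogf_div {a : ℕ → ℝ} (ha : Tame a) {x : ℝ} (hx : |x| < 1 / 4) :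
    HasDerivAt (ogf (shift fun n => a n / (n + 1))) (ogf a x) x := by
  convert (ha.div.shift.hasDerivAt hx).2 using 2
  funext n
  simp only [shift]
  field_simp

/-! ### The generating functions in closed form -/

/-- The generating function of the central binomial coefficients, `1 / s`. -/
lemma ogf_centralBinom {x : ℝ} (hx : |x| < 1 / 4) : √(1 - 4 * x) * ogf cb x = 1 := by
  have key := eq_of_hasDerivAt_zero (f := fun y => √(1 - 4 * y) * ogf cb y) (fun y hy => ?_) hx
  · simpa [ogf_zero, cb] using key
  obtain ⟨hs, hs2, hsd⟩ := sqrt_facts hy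
  have h0 : Tame fun _ => 0 := fun n => by rw [abs_zero]; positivity
  obtain ⟨D, hD, e⟩ := ogf_ode tame_cb h0 (fun n => by rw [cb_succ, add_zero]) hy
  refine (hsd.mul hD).congr_deriv ?_
  have hz : ogf (fun _ => 0) y = 0 := by simp [ogf]
  rw [hz, ← hs2] at e
  field_simp
  linarith

/-- The generating function of the Catalan numbers, `2 / (1 + s)`. -/
lemma ogf_catalan {x : ℝ} (hx : |x| < 1 / 4) : (1 + √(1 - 4 * x)) * ogf C x = 2 := by
  have key := eq_of_hasDerivAt_zero
    (f := fun y => ogf (shift fun n => cb n / (n + 1)) y + √(1 - 4 * y) / 2) (fun y hy => ?_) hx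
  · obtain ⟨hs, hs2, -⟩ := sqrt_facts hx
    simp only [← funext C_eq] at key
    rw [ogf_shift tame_C hx, ogf_zero] at key
    simp only [shift, mul_zero, sub_zero, Real.sqrt_one] at key
    -- the integrated identity is `x c = (1 - s) / 2`, which does not determine `c` at `0`
    rcases eq_or_ne x 0 with rfl | h
    · norm_num [ogf_zero, C]
    · apply mul_left_cancel₀ h
      linear_combination (1 + √(1 - 4 * x)) * key - hs2 / 2
  obtain ⟨hs, -, hsd⟩ := sqrt_facts hy
  refine ((hasDerivAt_mul_ogf_div tame_cb hy).add (hsd.div_const 2)).congr_deriv ?_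
  have := ogf_centralBinom hy
  field_simp
  linarith

/-- `s g + L = 0`: its derivative is `((1 - 4x) g' - 2 g - c) / s`, because `c = 2 / (1 + s)`. -/
lemma ogf_cbh {x : ℝ} (hx : |x| < 1 / 4) :
    √(1 - 4 * x) * ogf cbh x = -Real.log ((1 + √(1 - 4 * x)) / 2) := by
  have key := eq_of_hasDerivAt_zero
    (f := fun y => √(1 - 4 * y) * ogf cbh y + Real.log ((1 + √(1 - 4 * y)) / 2))
    (fun y hy => ?_) hx
  · norm_num [ogf_zero, cbh, H] at key
    linarith
  obtain ⟨hs, hs2, hsd⟩ := sqrt_facts hy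
  obtain ⟨D, hD, e⟩ := ogf_ode tame_cbh tame_C cbh_succ hy
  refine ((hsd.mul hD).add (hasDerivAt_log_half hy)).congr_deriv ?_
  have hc := ogf_catalan hy
  rw [← hs2] at e
  field_simp
  linear_combination (1 + √(1 - 4 * y)) * e + hc

theorem stmt_10 (x : ℝ) (hx0 : 0 < |x|) (hx : |x| < 1 / 4) :
    ∑' n : ℕ, C (n + 1) * (H (2 * (n + 1)) - H (n + 1)) * x ^ (n + 1)
      = (1 / (2 * x)) *
        ((1 - Real.sqrt (1 - 4 * x)) +
          (1 + Real.sqrt (1 - 4 * x)) * Real.log ((1 + Real.sqrt (1 - 4 * x)) / 2)) := by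
  have hne : x ≠ 0 := abs_pos.1 hx0
  have key := eq_of_hasDerivAt_zero
    (f := fun y => 2 * ogf (shift fun n => cbh n / (n + 1)) y -
      ((1 - √(1 - 4 * y)) + (1 + √(1 - 4 * y)) * Real.log ((1 + √(1 - 4 * y)) / 2)))
    (fun y hy => ?_) hx
  · rw [ogf_shift tame_cbh.div hx, ogf_zero] at key
    norm_num [shift] at key
    -- the term `n = 0` vanishes, so the sum may start there
    have hsum : ∑' n : ℕ, C (n + 1) * (H (2 * (n + 1)) - H (n + 1)) * x ^ (n + 1) =
        ogf (fun n => cbh n / (n + 1)) x := by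
      have hterm : ∀ n : ℕ, C n * (H (2 * n) - H n) = cbh n / (n + 1) := fun n => by
        rw [C_eq, cbh]; ring
      rw [ogf, (tame_cbh.div.summable hx).tsum_eq_zero_add]
      simp only [← hterm]
      simp [H]
    rw [hsum, one_div, eq_inv_mul_iff_mul_eq₀ (mul_ne_zero two_ne_zero hne)]
    linarith
  obtain ⟨hs, -, hsd⟩ := sqrt_facts hy
  refine (((hasDerivAt_mul_ogf_div tame_cbh hy).const_mul 2).sub
    ((hsd.const_sub 1).add ((hsd.const_add 1).mul (hasDerivAt_log_half hy)))).congr_deriv ?_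
  have hg := ogf_cbh hy
  field_simp
  linarith
end
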